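/- For every natural number n, the function β_n = μ_n + ν_n satisfies β_n''(z) − 2(z + 4z/(1+2z²))·β_n'(z) + 2n·β_n(z) = 0 for all z ∈ ℂ with 1 + 2z² ≠ 0, and β_n is not a polynomial: there is no polynomial p ∈ ℂ[X] with β_n(z) = p(z) for all z ∈ ℂ. -/

import Mathlib

/-- Even coefficients c_{2k}(n) of the generalized power series. -/
noncomputable def ceven (n k : ℕ) : ℂ :=
  if k = 0 then 1
  else if k = 1 then -(n : ℂ)
  else (-1) ^ k * 2 ^ k * (n : ℂ) * ((n : ℂ) - ((2 * (k : ℂ) - 1) ^ 2 + 1)) *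
    (∏ j ∈ Finset.Icc 1 (k - 2), ((n : ℂ) - 2 * (1 + (j : ℂ)))) /
      (Nat.factorial (2 * k) : ℂ)

/-- Odd coefficients: `codd n k` is c_{2k-1}(n), for k ≥ 1. -/
noncomputable def codd (n k : ℕ) : ℂ :=
  if k ≤ 1 then 1
  else (-1) ^ (k + 1) * 2 ^ (k - 1) * ((n : ℂ) - ((2 * ((k : ℂ) - 1)) ^ 2 + 1)) *
    (∏ j ∈ Finset.Icc 1 (k - 2), ((n : ℂ) - (2 * (1 + (j : ℂ)) - 1))) /
      (Nat.factorial (2 * k - 1) : ℂ)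

/-- μₙ(z) = Σ_{k≥0} c_{2k}(n)·z^{2k}. -/
noncomputable def muF (n : ℕ) (z : ℂ) : ℂ := ∑' k : ℕ, ceven n k * z ^ (2 * k)

/-- νₙ(z) = Σ_{k≥1} c_{2k-1}(n)·z^{2k-1}. -/
noncomputable def nuF (n : ℕ) (z : ℂ) : ℂ := ∑' k : ℕ, codd n (k + 1) * z ^ (2 * k + 1)

/-- βₙ = μₙ + νₙ. -/
noncomputable def betaF (n : ℕ) (z : ℂ) : ℂ := muF n z + nuF n z

noncomputable def bcoef (n m : ℕ) : ℂ :=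
  if m % 2 = 0 then ceven n (m / 2) else codd n (m / 2 + 1)

def Ent (a : ℕ → ℂ) : Prop := ∀ R : ℝ, 0 < R → Summable (fun m => ‖a m‖ * R ^ m)

noncomputable def DD (a : ℕ → ℂ) (m : ℕ) : ℂ := ((m : ℂ) + 1) * a (m + 1)

noncomputable def FF (a : ℕ → ℂ) (z : ℂ) : ℂ := ∑' m, a m * z ^ m

def SS (a : ℕ → ℂ) : ℕ → ℂ
  | 0 => 0
  | m + 1 => a m

lemma Ent.hasSum {a : ℕ → ℂ} (h : Ent a) (z : ℂ) : HasSum (fun m => a m * z ^ m) (FF a z) := by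
  apply Summable.hasSum
  apply Summable.of_norm_bounded (h (‖z‖ + 1) (by positivity))
  intro m
  rw [norm_mul, norm_pow]
  gcongr
  linarith

lemma Ent.dd {a : ℕ → ℂ} (h : Ent a) : Ent (DD a) := by
  intro R hR
  have h1 := (summable_nat_add_iff 1).2 (h (2 * (R + 1)) (by positivity))
  refine Summable.of_nonneg_of_le (fun m => by positivity) (fun m => ?_) h1
  have h2 : ((m : ℝ) + 1) ≤ 2 ^ (m + 1) := by exact_mod_cast (Nat.lt_two_pow_self (n := m + 1)).le
  have h3 : R ^ m ≤ (R + 1) ^ (m + 1) := by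
    calc R ^ m ≤ (R + 1) ^ m := by gcongr; linarith
      _ ≤ (R + 1) ^ (m + 1) := pow_le_pow_right₀ (by linarith) (by omega)
  have h4 : ‖DD a m‖ = ((m : ℝ) + 1) * ‖a (m + 1)‖ := by
    unfold DD
    rw [norm_mul]
    congr 1
    rw [← Nat.cast_succ, Complex.norm_natCast]; push_cast; ring
  rw [h4, mul_pow]
  calc ((m : ℝ) + 1) * ‖a (m + 1)‖ * R ^ m = ‖a (m + 1)‖ * (((m : ℝ) + 1) * R ^ m) := by ring
    _ ≤ _ := by gcongr

lemma Ent.deriv {a : ℕ → ℂ} (h : Ent a) : deriv (FF a) = FF (DD a) := by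
  funext z
  have h1 := Complex.hasSum_deriv_of_summable_norm (F := fun m w => a m * w ^ m)
    (U := Metric.ball 0 (‖z‖ + 1)) (z := z) (h (‖z‖ + 1) (by positivity))
    (fun i => by fun_prop) Metric.isOpen_ball
    (fun i w hw => by
      rw [norm_mul, norm_pow]
      have : ‖w‖ < ‖z‖ + 1 := by simpa using hw
      gcongr) (by simp)
  have h2 : HasSum (fun m => _root_.deriv (fun w : ℂ => a m * w ^ m) z) (FF (DD a) z) := by
    rw [← hasSum_nat_add_iff' 1]
    have := h.dd.hasSum z
    have e : FF (DD a) z - ∑ i ∈ Finset.range 1, _root_.deriv (fun w : ℂ => a i * w ^ i) z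
        = FF (DD a) z := by simp
    rw [e]
    have e2 : (fun m => _root_.deriv (fun w : ℂ => a (m + 1) * w ^ (m + 1)) z)
        = fun m => DD a m * z ^ m := by
      funext m
      simp [DD]
      ring
    rw [e2]
    exact this
  exact h1.unique h2

lemma hasSum_SS {a : ℕ → ℂ} {z s : ℂ} (h : HasSum (fun m => a m * z ^ m) s) :
    HasSum (fun m => SS a m * z ^ m) (z * s) := by
  rw [← hasSum_nat_add_iff' 1]
  simp only [Finset.range_one, Finset.sum_singleton, SS, zero_mul, sub_zero]
  have e : (fun m => a m * z ^ (m + 1)) = fun m => z * (a m * z ^ m) := by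
    funext m; ring
  rw [e]
  exact h.mul_left z

lemma DD_iter (N : ℕ) : ∀ (a : ℕ → ℂ) (k : ℕ), (DD^[N] a) k = 0 → a (N + k) = 0 := by
  induction N with
  | zero => intro a k h; simpa using h
  | succ N ih =>
    intro a k h
    rw [Function.iterate_succ_apply] at h
    have := ih _ _ h
    unfold DD at this
    rcases mul_eq_zero.1 this with h | h
    · exact absurd h (Nat.cast_add_one_ne_zero _)
    · rw [← h]; congr 1; omega

lemma Ent_poly (N : ℕ) : ∀ (a : ℕ → ℂ) (_ : Ent a) (p : Polynomial ℂ)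
    (_ : ∀ z, FF a z = p.eval z), ∀ z, FF (DD^[N] a) z = (Polynomial.derivative^[N] p).eval z := by
  induction N with
  | zero => intro a _ p hp; simpa using hp
  | succ N ih =>
    intro a ha p hp
    rw [Function.iterate_succ_apply, Function.iterate_succ_apply]
    apply ih _ ha.dd
    intro z
    rw [← ha.deriv, ← Polynomial.deriv]
    congr 1
    funext z
    exact hp z

lemma FF_zero (a : ℕ → ℂ) : FF a 0 = a 0 := by
  unfold FF
  rw [tsum_eq_single 0]
  · simp
  · intro m hm; simp [hm]

lemma prod_bd (n k : ℕ) (f : ℕ → ℂ) (hf : ∀ j, ‖f j‖ ≤ 2 * (n + 1) * (j + 1)) :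
    ‖∏ j ∈ Finset.Icc 1 k, f j‖ ≤ (2 * (n + 1)) ^ k * (Nat.factorial (k + 1) : ℝ) := by
  induction k with
  | zero => simp
  | succ k ih =>
    rw [Finset.prod_Icc_succ_top (by omega), norm_mul]
    calc _ ≤ ((2 * (n + 1)) ^ k * (Nat.factorial (k + 1) : ℝ)) * (2 * (n + 1) * ((k + 1 : ℕ) + 1)) := by
          gcongr; exact hf _
      _ = _ := by rw [Nat.factorial_succ (k + 1)]; push_cast; ring

lemma fac_bd (k l : ℕ) (hl : 2 * k + 1 ≤ l) :
    (Nat.factorial (k + 1) : ℝ) / (Nat.factorial l : ℝ) ≤ 1 / Nat.factorial k := by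
  rw [div_le_div_iff₀ (by positivity) (by positivity)]
  have h1 : (k + 1).factorial * k.factorial ≤ l.factorial := by
    calc _ ≤ (k + 1 + k).factorial :=
          Nat.le_of_dvd (Nat.factorial_pos _) (Nat.factorial_mul_factorial_dvd_factorial_add _ _)
      _ ≤ _ := Nat.factorial_le (by omega)
  have : ((k + 1).factorial * k.factorial : ℝ) ≤ l.factorial := by exact_mod_cast h1
  linarith

lemma q_bd (k : ℕ) : (2 * (k : ℝ) + 3) ^ 2 ≤ 9 * 9 ^ k := by
  have : (2 * (k : ℝ) + 3) ≤ 3 * 3 ^ k := by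
    induction k with
    | zero => simp
    | succ k ih => push_cast; rw [pow_succ]; nlinarith
  calc _ ≤ (3 * 3 ^ k : ℝ) ^ 2 := by gcongr
    _ = _ := by rw [mul_pow, ← pow_mul, mul_comm k 2, pow_mul]; norm_num

lemma ceven_add_two (n k : ℕ) : ceven n (k + 2) = (-1) ^ k * 2 ^ (k + 2) * (n : ℂ) *
    ((n : ℂ) - ((2 * (k : ℂ) + 3) ^ 2 + 1)) *
    (∏ j ∈ Finset.Icc 1 k, ((n : ℂ) - 2 * (1 + (j : ℂ)))) /
      (Nat.factorial (2 * k + 4) : ℂ) := by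
  simp only [ceven, Nat.add_sub_cancel, show k + 2 ≠ 0 by omega, show k + 2 ≠ 1 by omega, if_false]
  rw [show 2 * (k + 2) = 2 * k + 4 by ring]
  push_cast
  ring

lemma codd_add_two (n k : ℕ) : codd n (k + 2) = -(-1) ^ k * 2 ^ (k + 1) *
    ((n : ℂ) - ((2 * (k : ℂ) + 2) ^ 2 + 1)) *
    (∏ j ∈ Finset.Icc 1 k, ((n : ℂ) - (2 * (1 + (j : ℂ)) - 1))) /
      (Nat.factorial (2 * k + 3) : ℂ) := by
  simp only [codd, Nat.add_sub_cancel, show ¬ (k + 2 ≤ 1) by omega, if_false]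
  rw [show 2 * (k + 2) - 1 = 2 * k + 3 by omega, show k + 2 - 1 = k + 1 by omega]
  push_cast
  ring

lemma main_bd (n k l : ℕ) (hl : 2 * k + 1 ≤ l) (u q P : ℂ) (hu : ‖u‖ ≤ 4 * (n + 1) * 2 ^ k)
    (hq : ‖q‖ ≤ n + (2 * k + 3) ^ 2 + 1)
    (hP : ‖P‖ ≤ (2 * (n + 1)) ^ k * (Nat.factorial (k + 1) : ℝ)) :
    ‖u * q * P / (Nat.factorial l : ℂ)‖ ≤
      (4 * (n + 1) * (n + 10)) * ((36 * (n + 1)) ^ k / (Nat.factorial k : ℝ)) := by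
  rw [norm_div, norm_mul, norm_mul, Complex.norm_natCast]
  have h9 : (1 : ℝ) ≤ 9 ^ k := one_le_pow₀ (by norm_num)
  have hq' : ‖q‖ ≤ (n + 10) * 9 ^ k := by
    have := q_bd k
    have : (n + 1 : ℝ) * 1 ≤ (n + 1) * 9 ^ k := by gcongr
    linarith
  calc _ ≤ (4 * (n + 1) * 2 ^ k) * ((n + 10) * 9 ^ k) *
        ((2 * (n + 1)) ^ k * (Nat.factorial (k + 1) : ℝ)) / Nat.factorial l := by gcongr
    _ = (4 * (n + 1) * (n + 10)) * (2 ^ k * 9 ^ k * (2 * (n + 1)) ^ k) *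
        ((Nat.factorial (k + 1) : ℝ) / Nat.factorial l) := by ring
    _ ≤ (4 * (n + 1) * (n + 10)) * (2 ^ k * 9 ^ k * (2 * (n + 1)) ^ k) *
        (1 / Nat.factorial k) := mul_le_mul_of_nonneg_left (fac_bd k l hl) (by positivity)
    _ = _ := by rw [← mul_pow, ← mul_pow]; ring_nf

lemma ceven_bd (n k : ℕ) : ‖ceven n (k + 2)‖ ≤
      (4 * (n + 1) * (n + 10)) * ((36 * (n + 1)) ^ k / (Nat.factorial k : ℝ)) := by
  rw [ceven_add_two]
  apply main_bd _ _ _ (by omega)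
  · simp [pow_add]
    nlinarith [show (0:ℝ) < 2 ^ k by positivity]
  · refine (norm_sub_le _ _).trans ?_
    have : ‖((2 * (k : ℂ) + 3) ^ 2 + 1)‖ = (2 * (k : ℝ) + 3) ^ 2 + 1 := by
      rw [show ((2 * (k : ℂ) + 3) ^ 2 + 1) = (((2 * k + 3) ^ 2 + 1 : ℕ) : ℂ) by push_cast; ring,
        Complex.norm_natCast]
      push_cast; ring
    rw [this, Complex.norm_natCast]; linarith
  · apply prod_bd
    intro j
    refine (norm_sub_le _ _).trans ?_
    rw [show (2 * (1 + (j : ℂ))) = ((2 * (1 + j) : ℕ) : ℂ) by push_cast; ring,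
        Complex.norm_natCast, Complex.norm_natCast]
    push_cast
    nlinarith [show (0 : ℝ) ≤ n * j by positivity, show (0 : ℝ) ≤ n by positivity]

lemma codd_bd (n k : ℕ) : ‖codd n (k + 2)‖ ≤
      (4 * (n + 1) * (n + 10)) * ((36 * (n + 1)) ^ k / (Nat.factorial k : ℝ)) := by
  rw [codd_add_two]
  apply main_bd _ _ _ (by omega)
  · simp [pow_add]
    nlinarith [show (0:ℝ) < 2 ^ k by positivity, show (0:ℝ) ≤ n * 2 ^ k by positivity]
  · refine (norm_sub_le _ _).trans ?_
    have : ‖((2 * (k : ℂ) + 2) ^ 2 + 1)‖ = (2 * (k : ℝ) + 2) ^ 2 + 1 := by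
      rw [show ((2 * (k : ℂ) + 2) ^ 2 + 1) = (((2 * k + 2) ^ 2 + 1 : ℕ) : ℂ) by push_cast; ring,
        Complex.norm_natCast]
      push_cast; ring
    rw [this, Complex.norm_natCast]
    nlinarith [show (0 : ℝ) ≤ k by positivity]
  · apply prod_bd
    intro j
    refine (norm_sub_le _ _).trans ?_
    rw [show (2 * (1 + (j : ℂ)) - 1) = ((2 * j + 1 : ℕ) : ℂ) by push_cast; ring,
        Complex.norm_natCast, Complex.norm_natCast]
    push_cast
    nlinarith [show (0 : ℝ) ≤ n * j by positivity, show (0 : ℝ) ≤ n by positivity]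

lemma bcoef_even (n k : ℕ) : bcoef n (2 * k) = ceven n k := by
  simp [bcoef]

lemma bcoef_odd (n k : ℕ) : bcoef n (2 * k + 1) = codd n (k + 1) := by
  have h1 : (2 * k + 1) % 2 = 1 := by omega
  have h2 : (2 * k + 1) / 2 = k := by omega
  simp [bcoef, h1, h2]

lemma sum_even (n : ℕ) (R : ℝ) (hR : 0 < R) : Summable (fun k => ‖ceven n k‖ * R ^ (2 * k)) := by
  rw [← summable_nat_add_iff 2]
  have h := ((Real.summable_pow_div_factorial (36 * (n + 1) * R ^ 2)).mul_left
    (4 * (n + 1) * (n + 10) : ℝ)).mul_left (R ^ 4)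
  refine Summable.of_nonneg_of_le (fun m => by positivity) (fun k => ?_) h
  calc _ ≤ ((4 * (n + 1) * (n + 10)) * ((36 * (n + 1)) ^ k / (Nat.factorial k : ℝ))) *
        R ^ (2 * (k + 2)) := by gcongr; exact ceven_bd n k
    _ = _ := by rw [mul_pow (36 * ((n : ℝ) + 1))]; ring

lemma sum_odd (n : ℕ) (R : ℝ) (hR : 0 < R) :
    Summable (fun k => ‖codd n (k + 1)‖ * R ^ (2 * k + 1)) := by
  rw [← summable_nat_add_iff 1]
  have h := ((Real.summable_pow_div_factorial (36 * (n + 1) * R ^ 2)).mul_left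
    (4 * (n + 1) * (n + 10) : ℝ)).mul_left (R ^ 3)
  refine Summable.of_nonneg_of_le (fun m => by positivity) (fun k => ?_) h
  calc _ ≤ ((4 * (n + 1) * (n + 10)) * ((36 * (n + 1)) ^ k / (Nat.factorial k : ℝ))) *
        R ^ (2 * (k + 1) + 1) := by gcongr; exact codd_bd n k
    _ = _ := by rw [mul_pow (36 * ((n : ℝ) + 1))]; ring

lemma bcoef_ent (n : ℕ) : Ent (bcoef n) := by
  intro R hR
  have h1 := sum_even n R hR
  have h2 := sum_odd n R hR
  refine (HasSum.even_add_odd (f := fun m => ‖bcoef n m‖ * R ^ m)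
    (m := ∑' k, ‖ceven n k‖ * R ^ (2 * k))
    (m' := ∑' k, ‖codd n (k + 1)‖ * R ^ (2 * k + 1)) ?_ ?_).summable
  · simp only [bcoef_even]; exact h1.hasSum
  · simp only [bcoef_odd]; exact h2.hasSum

lemma betaF_eq (n : ℕ) : betaF n = FF (bcoef n) := by
  funext z
  have h := ((bcoef_ent n).hasSum z).summable
  unfold betaF muF nuF FF
  rw [← tsum_even_add_odd (f := fun m => bcoef n m * z ^ m)]
  · simp only [bcoef_even, bcoef_odd]
  · exact h.comp_injective (i := fun k => 2 * k) (fun a b h => by simpa using h)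
  · exact h.comp_injective (i := fun k => 2 * k + 1) (fun a b h => by simpa using h)

lemma rec_even (n k : ℕ) : (2 * (k : ℂ) + 4) * (2 * k + 3) * ceven n (k + 2) +
    (2 * (2 * k + 2) ^ 2 - 12 * (2 * k + 2) + 2 * n) * ceven n (k + 1) +
    4 * (n - 2 * k) * ceven n k = 0 := by
  rcases k with _ | _ | k
  · rw [ceven_add_two]
    simp [ceven, Nat.factorial]
    ring
  · rw [ceven_add_two, ceven_add_two n 0]
    simp [ceven, Nat.factorial]
    ring
  · rw [ceven_add_two n (k + 1 + 1), show k + 1 + 1 + 1 = (k + 1) + 2 by ring,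
      ceven_add_two n (k + 1), show k + 1 + 1 = k + 2 by ring, ceven_add_two n k,
      Finset.prod_Icc_succ_top (show 1 ≤ k + 1 + 1 by omega),
      Finset.prod_Icc_succ_top (show 1 ≤ k + 1 by omega)]
    set P := ∏ j ∈ Finset.Icc 1 k, ((n : ℂ) - 2 * (1 + (j : ℂ)))
    rw [show 2 * (k + 2) + 4 = (2 * k + 4) + 1 + 1 + 1 + 1 by ring,
      show 2 * (k + 1) + 4 = (2 * k + 4) + 1 + 1 by ring]
    rw [Nat.factorial_succ (2 * k + 4 + 1 + 1 + 1), Nat.factorial_succ (2 * k + 4 + 1 + 1),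
      Nat.factorial_succ (2 * k + 4 + 1), Nat.factorial_succ (2 * k + 4)]
    have hf : ((2 * k + 4).factorial : ℂ) ≠ 0 := by exact_mod_cast Nat.factorial_ne_zero _
    have e1 : (2 * (k : ℂ) + 4 + 1) ≠ 0 := by exact_mod_cast (by omega : 2 * k + 4 + 1 ≠ 0)
    have e2 : (2 * (k : ℂ) + 4 + 1 + 1) ≠ 0 := by exact_mod_cast (by omega : 2 * k + 4 + 1 + 1 ≠ 0)
    have e3 : (2 * (k : ℂ) + 4 + 1 + 1 + 1) ≠ 0 := by exact_mod_cast (by omega : 2 * k + 4 + 1 + 1 + 1 ≠ 0)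
    have e4 : (2 * (k : ℂ) + 4 + 1 + 1 + 1 + 1) ≠ 0 := by exact_mod_cast (by omega : 2 * k + 4 + 1 + 1 + 1 + 1 ≠ 0)
    generalize (2 * k + 4).factorial = F at *
    push_cast
    field_simp
    ring

lemma rec_odd (n k : ℕ) : (2 * (k : ℂ) + 5) * (2 * k + 4) * codd n (k + 3) +
    (2 * (2 * k + 3) ^ 2 - 12 * (2 * k + 3) + 2 * n) * codd n (k + 2) +
    4 * (n - (2 * k + 1)) * codd n (k + 1) = 0 := by
  rcases k with _ | k
  · rw [codd_add_two n 0, show 0 + 3 = 1 + 2 by rfl, codd_add_two n 1]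
    simp [codd, Nat.factorial]
    ring
  · rw [show k + 1 + 3 = k + 2 + 2 by ring, codd_add_two n (k + 2),
      codd_add_two n (k + 1), show k + 1 + 1 = k + 2 by ring, codd_add_two n k,
      Finset.prod_Icc_succ_top (show 1 ≤ k + 1 + 1 by omega),
      Finset.prod_Icc_succ_top (show 1 ≤ k + 1 by omega)]
    set P := ∏ j ∈ Finset.Icc 1 k, ((n : ℂ) - (2 * (1 + (j : ℂ)) - 1))
    rw [show 2 * (k + 2) + 3 = (2 * k + 3) + 1 + 1 + 1 + 1 by ring,
      show 2 * (k + 1) + 3 = (2 * k + 3) + 1 + 1 by ring]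
    rw [Nat.factorial_succ (2 * k + 3 + 1 + 1 + 1), Nat.factorial_succ (2 * k + 3 + 1 + 1),
      Nat.factorial_succ (2 * k + 3 + 1), Nat.factorial_succ (2 * k + 3)]
    have hf : ((2 * k + 3).factorial : ℂ) ≠ 0 := by exact_mod_cast Nat.factorial_ne_zero _
    have e1 : (2 * (k : ℂ) + 3 + 1) ≠ 0 := by exact_mod_cast (by omega : 2 * k + 3 + 1 ≠ 0)
    have e2 : (2 * (k : ℂ) + 3 + 1 + 1) ≠ 0 := by exact_mod_cast (by omega : 2 * k + 3 + 1 + 1 ≠ 0)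
    have e3 : (2 * (k : ℂ) + 3 + 1 + 1 + 1) ≠ 0 := by exact_mod_cast (by omega : 2 * k + 3 + 1 + 1 + 1 ≠ 0)
    have e4 : (2 * (k : ℂ) + 3 + 1 + 1 + 1 + 1) ≠ 0 := by exact_mod_cast (by omega : 2 * k + 3 + 1 + 1 + 1 + 1 ≠ 0)
    generalize (2 * k + 3).factorial = F at *
    push_cast
    field_simp
    ring

lemma bcoef_rec (n m : ℕ) : ((m : ℂ) + 4) * (m + 3) * bcoef n (m + 4) +
    (2 * ((m : ℂ) + 2) ^ 2 - 12 * (m + 2) + 2 * n) * bcoef n (m + 2) +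
    4 * (n - m) * bcoef n m = 0 := by
  rcases Nat.even_or_odd' m with ⟨k, rfl | rfl⟩
  · rw [show 2 * k + 4 = 2 * (k + 2) by ring, show 2 * k + 2 = 2 * (k + 1) by ring,
      bcoef_even, bcoef_even, bcoef_even]
    have := rec_even n k
    push_cast
    linear_combination this
  · rw [show 2 * k + 1 + 4 = 2 * (k + 2) + 1 by ring, show 2 * k + 1 + 2 = 2 * (k + 1) + 1 by ring,
      bcoef_odd, bcoef_odd, bcoef_odd]
    have := rec_odd n k
    push_cast
    linear_combination this

lemma ode (n : ℕ) (z : ℂ) : (1 + 2 * z ^ 2) * FF (DD (DD (bcoef n))) z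
    - (10 * z + 4 * z ^ 3) * FF (DD (bcoef n)) z
    + 2 * n * (1 + 2 * z ^ 2) * FF (bcoef n) z = 0 := by
  have h0 := (bcoef_ent n).hasSum z
  have h1 := (bcoef_ent n).dd.hasSum z
  have h2 := (bcoef_ent n).dd.dd.hasSum z
  have H := ((((h2.add ((hasSum_SS (hasSum_SS h2)).mul_left 2)).add
    ((hasSum_SS h1).mul_left (-10))).add ((hasSum_SS (hasSum_SS (hasSum_SS h1))).mul_left (-4))).add
    (h0.mul_left (2 * (n : ℂ)))).add ((hasSum_SS (hasSum_SS h0)).mul_left (4 * (n : ℂ)))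
  have H0 := H.unique (a₂ := 0) (by
    convert hasSum_zero (α := ℂ) (β := ℕ) using 2 with m
    have b0 : bcoef n 0 = 1 := by simp [bcoef, ceven]
    have b1 : bcoef n 1 = 1 := by simp [bcoef, codd]
    have b2 : bcoef n 2 = -n := by simp [bcoef, ceven]
    have b3 : bcoef n 3 = (5 - n) / 3 := by
      have h := bcoef_odd n 1
      rw [codd_add_two n 0] at h
      refine h.trans ?_
      simp [Nat.factorial]; ring
    rcases m with _ | _ | _ | m
    · simp [SS, DD, b0, b2]; ring
    · simp [SS, DD, b1, b3]; ring
    · have := bcoef_rec n 0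
      simp [SS, DD, b0, b2] at this ⊢
      linear_combination z ^ 2 * this
    · have := bcoef_rec n (m + 1)
      simp only [SS, DD]
      push_cast at this ⊢
      linear_combination z ^ (m + 3) * this)
  linear_combination H0

lemma even_ne (n k : ℕ) (hn : n % 2 = 1) : ceven n (k + 2) ≠ 0 := by
  rw [ceven_add_two]
  refine div_ne_zero (mul_ne_zero (mul_ne_zero (mul_ne_zero (by simp) ?_) ?_) ?_)
    (by exact_mod_cast Nat.factorial_ne_zero _)
  · exact_mod_cast (by omega : n ≠ 0)
  · rw [sub_ne_zero]
    intro h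
    have h' : n = (2 * k + 3) ^ 2 + 1 := by exact_mod_cast h
    have : (2 * k + 3) ^ 2 + 1 = 2 * (2 * k ^ 2 + 6 * k + 5) := by ring
    omega
  · rw [Finset.prod_ne_zero_iff]
    intro j _
    rw [sub_ne_zero]
    intro h
    have h' : n = 2 * (1 + j) := by exact_mod_cast h
    omega

lemma odd_ne (n k : ℕ) (hn : n % 2 = 0) : codd n (k + 2) ≠ 0 := by
  rw [codd_add_two]
  refine div_ne_zero (mul_ne_zero (mul_ne_zero (by simp) ?_) ?_)
    (by exact_mod_cast Nat.factorial_ne_zero _)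
  · rw [sub_ne_zero]
    intro h
    have h' : n = (2 * k + 2) ^ 2 + 1 := by exact_mod_cast h
    have : (2 * k + 2) ^ 2 + 1 = 2 * (2 * k ^ 2 + 4 * k + 2) + 1 := by ring
    omega
  · rw [Finset.prod_ne_zero_iff]
    intro j _
    rw [sub_ne_zero]
    intro h
    have h' : n + 1 = 2 * (1 + j) := by
      have : (n : ℂ) + 1 = 2 * (1 + j) := by rw [h]; ring
      exact_mod_cast this
    omega

theorem stmt7 (n : ℕ) :
    (∀ z : ℂ, 1 + 2 * z ^ 2 ≠ 0 →
      deriv (deriv (betaF n)) z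
        - 2 * (z + 4 * z / (1 + 2 * z ^ 2)) * deriv (betaF n) z
        + 2 * (n : ℂ) * betaF n z = 0) ∧
    ¬ ∃ p : Polynomial ℂ, ∀ z : ℂ, betaF n z = p.eval z := by
  rw [betaF_eq]
  have hE := bcoef_ent n
  constructor
  · intro z hz
    rw [hE.deriv, hE.dd.deriv]
    have := ode n z
    field_simp
    linear_combination this
  · rintro ⟨p, hp⟩
    have key : ∀ N, p.natDegree < N → bcoef n N = 0 := by
      intro N hN
      have h := Ent_poly N _ hE p hp 0
      rw [Polynomial.iterate_derivative_eq_zero hN, FF_zero] at h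
      exact DD_iter N _ 0 (by simpa using h)
    rcases Nat.mod_two_eq_zero_or_one n with hn | hn
    · have := key (2 * (p.natDegree + 1) + 1) (by omega)
      rw [bcoef_odd] at this
      exact odd_ne n _ hn this
    · have := key (2 * (p.natDegree + 2)) (by omega)
      rw [bcoef_even] at this
      exact even_ne n _ hn this
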